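/- For all indices i, j ∈ {1,2,3}, the components of the Laplace–Runge–Lenz vector satisfy the Poisson bracket relation {A_i, A_j}(r,v) = −2 E(r,v) Σ_k ε_{ijk} L_k(r,v) for all (r,v) with r ≠ 0. -/

import Mathlib

/-!
Expanding `v × (r × v)` turns the LRL vector into `A = ‖v‖² r - ⟪r, v⟫ v - (κ / ‖r‖) r`, which makes
sense in every real Hilbert space. For `r ≠ 0` its component `A_a = ⟪a, A⟫` along `a` has the
gradients
* `∇_r A_a = (‖v‖² - κ / ‖r‖) a - ⟪a, v⟫ v + (κ ⟪a, r⟫ / ‖r‖³) r`,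
* `∇_v A_a = 2 ⟪a, r⟫ v - ⟪a, v⟫ r - ⟪r, v⟫ a`.

The terms of `⟪∇_r A_a, ∇_v A_b⟫` that are symmetric in `a` and `b` drop out of the bracket. The
three summands of `∇_r A_a` contribute multiples of `⟪a, r⟫ ⟪b, v⟫ - ⟪b, r⟫ ⟪a, v⟫`, the component
of the angular momentum in the plane of `a` and `b`, with coefficients `-3 (‖v‖² - κ / ‖r‖)`,
`2 ‖v‖²` and `-κ / ‖r‖`, whose sum is `-(‖v‖² - 2 κ / ‖r‖) = -2 E`.
-/

noncomputable section

/-- Physical 3-space. -/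
abbrev E3 : Type := EuclideanSpace ℝ (Fin 3)

/-- Build a vector in `E3` from its components. -/
def toE3 (f : Fin 3 → ℝ) : E3 := (EuclideanSpace.equiv (Fin 3) ℝ).symm f

/-- Cross product in `ℝ³`. -/
def cross (a b : E3) : E3 :=
  toE3 ![a 1 * b 2 - a 2 * b 1, a 2 * b 0 - a 0 * b 2, a 0 * b 1 - a 1 * b 0]

/-- Dot product in `ℝ³`. -/
def dot (a b : E3) : ℝ := ∑ i, a i * b i

/-- Gradient in the `r` variable of a function on phase space. -/
def gradR (F : E3 × E3 → ℝ) (p : E3 × E3) : E3 := gradient (fun x => F (x, p.2)) p.1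

/-- Gradient in the `v` variable of a function on phase space. -/
def gradV (F : E3 × E3 → ℝ) (p : E3 × E3) : E3 := gradient (fun y => F (p.1, y)) p.2

/-- Poisson bracket of two functions on phase space. -/
def pb (F G : E3 × E3 → ℝ) (p : E3 × E3) : ℝ :=
  dot (gradR F p) (gradV G p) - dot (gradR G p) (gradV F p)

/-- Energy `E(r,v) = (1/2)‖v‖² − κ/‖r‖`. -/
def energy (κ : ℝ) (p : E3 × E3) : ℝ := (1/2) * ‖p.2‖^2 - κ / ‖p.1‖

/-- Angular momentum `L(r,v) = r × v`. -/
def angMom (p : E3 × E3) : E3 := cross p.1 p.2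

/-- Laplace–Runge–Lenz vector `A(r,v) = v × L − κ r/‖r‖`. -/
def lrl (κ : ℝ) (p : E3 × E3) : E3 := cross p.2 (angMom p) - (κ / ‖p.1‖) • p.1

/-- LRL direction vector `Θ = A/‖A‖`. -/
def lrlDir (κ : ℝ) (p : E3 × E3) : E3 := ‖lrl κ p‖⁻¹ • lrl κ p

/-- Levi-Civita symbol `ε_{ijk}` on indices in `{0,1,2}`. -/
def eps (i j k : Fin 3) : ℝ :=
  (((j : ℕ) : ℝ) - ((i : ℕ) : ℝ)) * (((k : ℕ) : ℝ) - ((i : ℕ) : ℝ))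
    * (((k : ℕ) : ℝ) - ((j : ℕ) : ℝ)) / 2

open scoped InnerProductSpace Gradient

section Hilbert

variable {V : Type*} [NormedAddCommGroup V] [InnerProductSpace ℝ V]

/-- The Kepler energy on the phase space `V × V` of a real inner product space `V`; for `V = E3` it
is `energy`. -/
def keplerEnergy (κ : ℝ) (p : V × V) : ℝ := (1 / 2) * ‖p.2‖ ^ 2 - κ / ‖p.1‖

/-- The Laplace–Runge–Lenz vector on the phase space of a real inner product space, written without
a cross product by expanding `v × (r × v)` to `‖v‖² r - ⟪r, v⟫ v`; for `V = E3` it is `lrl`. -/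
def lrlVector (κ : ℝ) (p : V × V) : V :=
  ‖p.2‖ ^ 2 • p.1 - ⟪p.1, p.2⟫_ℝ • p.2 - (κ / ‖p.1‖) • p.1

theorem inner_lrlVector (κ : ℝ) (a r v : V) :
    ⟪a, lrlVector κ (r, v)⟫_ℝ
      = ‖v‖ ^ 2 * ⟪a, r⟫_ℝ - ⟪r, v⟫_ℝ * ⟪a, v⟫_ℝ - κ * ‖r‖⁻¹ * ⟪a, r⟫_ℝ := by
  simp only [lrlVector, inner_sub_right, real_inner_smul_right, div_eq_mul_inv]

theorem hasFDerivAt_inner_right (a x : V) : HasFDerivAt (fun y : V => ⟪a, y⟫_ℝ) (innerSL ℝ a) x :=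
  (innerSL ℝ a).hasFDerivAt

theorem hasFDerivAt_inner_left (a x : V) : HasFDerivAt (fun y : V => ⟪y, a⟫_ℝ) (innerSL ℝ a) x := by
  simpa only [real_inner_comm a] using hasFDerivAt_inner_right a x

theorem hasFDerivAt_norm {x : V} (hx : x ≠ 0) :
    HasFDerivAt (fun y : V => ‖y‖) (‖x‖⁻¹ • innerSL ℝ x) x := by
  have h := (hasStrictFDerivAt_norm_sq x).hasFDerivAt.sqrt (pow_ne_zero 2 (norm_ne_zero_iff.mpr hx))
  simp only [Real.sqrt_sq (norm_nonneg _)] at h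
  refine h.congr_fderiv ?_
  ext y
  simp only [one_div, mul_inv_rev, smul_apply, coe_innerSL_apply, nsmul_eq_mul, Nat.cast_ofNat,
    smul_eq_mul]
  field_simp

theorem hasFDerivAt_inv_norm {x : V} (hx : x ≠ 0) :
    HasFDerivAt (fun y : V => ‖y‖⁻¹) (-(‖x‖ ^ 3)⁻¹ • innerSL ℝ x) x := by
  have hnorm : ‖x‖ ≠ 0 := norm_ne_zero_iff.mpr hx
  refine ((hasDerivAt_inv hnorm).comp_hasFDerivAt x (hasFDerivAt_norm hx)).congr_fderiv ?_
  rw [smul_smul]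
  congr 1
  field_simp

variable [CompleteSpace V]

/-- The canonical Poisson bracket on the phase space `V × V` of a real Hilbert space `V`, the first
factor being the position and the second the velocity; for `V = E3` it is `pb`. -/
def poissonBracket (F G : V × V → ℝ) (p : V × V) : ℝ :=
  ⟪∇ (fun x => F (x, p.2)) p.1, ∇ (fun y => G (p.1, y)) p.2⟫_ℝ
    - ⟪∇ (fun x => G (x, p.2)) p.1, ∇ (fun y => F (p.1, y)) p.2⟫_ℝ

theorem hasGradientAt_inner_lrlVector_position (κ : ℝ) (a v : V) {r : V} (hr : r ≠ 0) :
    HasGradientAt (fun x => ⟪a, lrlVector κ (x, v)⟫_ℝ)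
      ((‖v‖ ^ 2 - κ / ‖r‖) • a - ⟪a, v⟫_ℝ • v + (κ * ⟪a, r⟫_ℝ / ‖r‖ ^ 3) • r) r := by
  rw [hasGradientAt_iff_hasFDerivAt]
  simp only [inner_lrlVector]
  have ha := hasFDerivAt_inner_right a r
  have hv := hasFDerivAt_inner_left v r
  have hpotential := ((hasFDerivAt_inv_norm hr).const_mul κ).mul ha
  refine (((ha.const_mul (‖v‖ ^ 2)).sub (hv.mul_const ⟪a, v⟫_ℝ)).sub hpotential).congr_fderiv ?_
  ext y
  simp only [neg_smul, smul_neg, sub_apply, smul_apply, coe_innerSL_apply, smul_eq_mul, add_apply,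
    neg_apply, map_add, map_sub, map_smul, InnerProductSpace.toDual_apply_apply]
  ring

theorem hasGradientAt_inner_lrlVector_velocity (κ : ℝ) (a r v : V) :
    HasGradientAt (fun y => ⟪a, lrlVector κ (r, y)⟫_ℝ)
      ((2 * ⟪a, r⟫_ℝ) • v - ⟪a, v⟫_ℝ • r - ⟪r, v⟫_ℝ • a) v := by
  rw [hasGradientAt_iff_hasFDerivAt]
  simp only [inner_lrlVector]
  have ha := hasFDerivAt_inner_right a v
  have hr := hasFDerivAt_inner_right r v
  have hsq := (hasStrictFDerivAt_norm_sq v).hasFDerivAt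
  refine (((hsq.mul_const ⟪a, r⟫_ℝ).sub (hr.mul ha)).sub_const _).congr_fderiv ?_
  ext y
  simp only [sub_apply, smul_apply, coe_innerSL_apply, nsmul_eq_mul, Nat.cast_ofNat, smul_eq_mul,
    add_apply, map_sub, map_smul, InnerProductSpace.toDual_apply_apply]
  ring

theorem poisson_lrl_lrl_general (κ : ℝ) (a b : V) {r : V} (v : V) (hr : r ≠ 0) :
    poissonBracket (fun p => ⟪a, lrlVector κ p⟫_ℝ) (fun p => ⟪b, lrlVector κ p⟫_ℝ) (r, v)
      = -2 * keplerEnergy κ (r, v) * (⟪a, r⟫_ℝ * ⟪b, v⟫_ℝ - ⟪b, r⟫_ℝ * ⟪a, v⟫_ℝ) := by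
  have hbracket (c d : V) :
      ⟪∇ (fun x => ⟪c, lrlVector κ (x, v)⟫_ℝ) r, ∇ (fun y => ⟪d, lrlVector κ (r, y)⟫_ℝ) v⟫_ℝ
        = (‖v‖ ^ 2 - κ / ‖r‖)
            * (2 * ⟪d, r⟫_ℝ * ⟪c, v⟫_ℝ - ⟪d, v⟫_ℝ * ⟪c, r⟫_ℝ - ⟪r, v⟫_ℝ * ⟪c, d⟫_ℝ)
          - 2 * ⟪c, v⟫_ℝ * (‖v‖ ^ 2 * ⟪d, r⟫_ℝ - ⟪r, v⟫_ℝ * ⟪d, v⟫_ℝ)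
          + κ * ⟪c, r⟫_ℝ * (⟪r, v⟫_ℝ * ⟪d, r⟫_ℝ / ‖r‖ ^ 3 - ⟪d, v⟫_ℝ / ‖r‖) := by
    have hnorm : ‖r‖ ≠ 0 := norm_ne_zero_iff.mpr hr
    rw [(hasGradientAt_inner_lrlVector_position κ c v hr).gradient,
      (hasGradientAt_inner_lrlVector_velocity κ d r v).gradient]
    simp only [inner_add_left, inner_sub_left, inner_sub_right, real_inner_smul_left,
      real_inner_smul_right, real_inner_self_eq_norm_sq, real_inner_comm r v,
      real_inner_comm d v, real_inner_comm d r]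
    field_simp
    ring
  rw [poissonBracket, hbracket a b, hbracket b a, keplerEnergy, real_inner_comm a b]
  ring

end Hilbert

section Euclidean

theorem dot_eq_inner (a b : E3) : dot a b = ⟪a, b⟫_ℝ := by
  simp [dot, PiLp.inner_apply, mul_comm]

theorem pb_eq_poissonBracket : pb = poissonBracket := by
  ext F G p
  simp only [pb, poissonBracket, dot_eq_inner, gradR, gradV]

theorem energy_eq_keplerEnergy : energy = keplerEnergy := rfl

open scoped Matrix in
theorem cross_eq_toLp (a b : E3) : cross a b = WithLp.toLp 2 (a.ofLp ⨯₃ b.ofLp) := rfl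

theorem cross_cross_eq_inner_smul_sub (a b c : E3) :
    cross a (cross b c) = ⟪a, c⟫_ℝ • b - ⟪a, b⟫_ℝ • c := by
  ext i
  simp [cross_eq_toLp, cross_cross_eq_smul_sub_smul', EuclideanSpace.inner_eq_star_dotProduct,
    dotProduct_comm c.ofLp]

theorem lrl_eq_lrlVector : lrl = lrlVector := by
  ext κ p i
  simp only [lrl, angMom, cross_cross_eq_inner_smul_sub, lrlVector, real_inner_self_eq_norm_sq,
    real_inner_comm p.1 p.2]

theorem sum_eps_mul_cross (a b : E3) (i j : Fin 3) :
    ∑ k, eps i j k * cross a b k = a i * b j - a j * b i := by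
  fin_cases i <;> fin_cases j <;>
    simp [eps, cross, toE3, Fin.sum_univ_three] <;> ring

end Euclidean

/-- The components of the LRL vector satisfy
`{A_i, A_j}(r,v) = −2 E(r,v) Σ_k ε_{ijk} L_k(r,v)` for all `(r,v)` with `r ≠ 0`. -/
theorem poisson_lrl_lrl (κ : ℝ) (hκ : 0 < κ) (i j : Fin 3)
    (r v : E3) (hr : r ≠ 0) :
    pb (fun p => lrl κ p i) (fun p => lrl κ p j) (r, v)
      = -2 * energy κ (r, v) * ∑ k, eps i j k * angMom (r, v) k := by
  rw [pb_eq_poissonBracket, lrl_eq_lrlVector, energy_eq_keplerEnergy, angMom, sum_eps_mul_cross]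
  simpa only [EuclideanSpace.basisFun_inner] using
    poisson_lrl_lrl_general κ (EuclideanSpace.basisFun (Fin 3) ℝ i)
      (EuclideanSpace.basisFun (Fin 3) ℝ j) v hr
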